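/- Let U ⊆ ℝⁿ be open, let v : ℝⁿ → ℝⁿ be a C¹ vector field, let Pe and μ be real constants, and let φ, φ† : ℝⁿ → ℝ be C² functions with φ†(x) > 0 for all x ∈ U, satisfying the adjoint eigenvalue equation −Pe v·∇φ† − Δφ† = μ φ† on U. Set β := φ φ† and Pe v* := Pe v φ φ† + φ ∇φ† − φ† ∇φ. Let w : ℝⁿ × ℝ → ℝ be C² in space and C¹ in time and define c(x,t) := φ(x) e^{−μ t} w(x,t). Then at every (x,t) ∈ U × ℝ, φ†(x) [ ∂ₜc + div( Pe v c − ∇c ) ](x,t) = e^{−μ t} [ β ∂ₜw + div( Pe v* w − β ∇w ) ](x,t); in particular, c satisfies the advection–diffusion equation ∂ₜc + div(Pe v c − ∇c) = 0 on U × ℝ if and only if w satisfies the modified equation β ∂ₜw + div(Pe v* w − β ∇w) = 0 on U × ℝ. (This is the full spectral decomposition c = φ e^{−ε⁻²λ t} w of Section 3.1.) -/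

import Mathlib

/-!
Everything rests on Lagrange's identity for `L c = div (a c - ∇c)` with drift `a = Pe v`,
`φ† L c - c L† φ† = div (φ† (a c - ∇c) + c ∇φ†)`.
For `c = φ e^{-μt} w` the product rule `∇c = e^{-μt} (φ ∇w + w ∇φ)` turns the flux on the right
into `e^{-μt} (Pe v* w - β ∇w)`, while `L† φ† = μ φ†` makes `c L† φ†` cancel the term coming from
`∂ₜ e^{-μt}`.
-/

/-- Gradient of a scalar field on `ℝⁿ` (components w.r.t. the standard basis). -/
noncomputable def vgrad {n : ℕ} (f : (Fin n → ℝ) → ℝ) (x : Fin n → ℝ) : Fin n → ℝ :=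
  fun i => fderiv ℝ f x (Pi.single i 1)

/-- Divergence of a vector field on `ℝⁿ`: `∑ i, ∂ᵢ Fᵢ`. -/
noncomputable def vdiv {n : ℕ} (F : (Fin n → ℝ) → (Fin n → ℝ)) (x : Fin n → ℝ) : ℝ :=
  ∑ i, fderiv ℝ (fun y => F y i) x (Pi.single i 1)

section VectorCalculus

variable {n : ℕ} {f g : (Fin n → ℝ) → ℝ} {F G : (Fin n → ℝ) → (Fin n → ℝ)} {x : Fin n → ℝ}

lemma differentiableAt_vgrad (hf : ContDiffAt ℝ 2 f x) : DifferentiableAt ℝ (vgrad f) x := by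
  have hf' : DifferentiableAt ℝ (fderiv ℝ f) x :=
    (hf.fderiv_right (m := 1) one_add_one_eq_two.le).differentiableAt one_ne_zero
  exact differentiableAt_pi.2 fun _ => hf'.clm_apply (differentiableAt_const _)

lemma vgrad_mul (hf : DifferentiableAt ℝ f x) (hg : DifferentiableAt ℝ g x) :
    vgrad (fun y => f y * g y) x = f x • vgrad g x + g x • vgrad f x := by
  ext i
  simp [vgrad, fderiv_fun_mul hf hg]

lemma vgrad_const_mul (r : ℝ) : vgrad (fun y => r * f y) x = r • vgrad f x :=
  funext fun i => DFunLike.congr_fun (congrFun (fderiv_const_smul_field r) x) (Pi.single i 1)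

lemma vdiv_congr_of_eventuallyEq (h : F =ᶠ[nhds x] G) : vdiv F x = vdiv G x :=
  Finset.sum_congr rfl fun i _ =>
    DFunLike.congr_fun (h.fun_comp fun z => z i).fderiv_eq (Pi.single i 1)

lemma vdiv_add (hF : DifferentiableAt ℝ F x) (hG : DifferentiableAt ℝ G x) :
    vdiv (fun y => F y + G y) x = vdiv F x + vdiv G x := by
  simp only [vdiv, Pi.add_apply, ← Finset.sum_add_distrib]
  refine Finset.sum_congr rfl fun i _ => ?_
  rw [fderiv_fun_add (differentiableAt_pi.1 hF i) (differentiableAt_pi.1 hG i)]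
  rfl

lemma vdiv_const_smul (r : ℝ) : vdiv (fun y => r • F y) x = r * vdiv F x := by
  rw [vdiv, vdiv, Finset.mul_sum]
  exact Finset.sum_congr rfl fun i _ => congrFun (vgrad_const_mul r) i

lemma vdiv_smul (hf : DifferentiableAt ℝ f x) (hF : DifferentiableAt ℝ F x) :
    vdiv (fun y => f y • F y) x = f x * vdiv F x + vgrad f x ⬝ᵥ F x := by
  simp only [vdiv, dotProduct, vgrad, Pi.smul_apply, smul_eq_mul, Finset.mul_sum,
    ← Finset.sum_add_distrib]
  refine Finset.sum_congr rfl fun i _ => ?_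
  simp [fderiv_fun_mul hf (differentiableAt_pi.1 hF i), mul_comm]

end VectorCalculus

section AdvectionDiffusion

variable {n : ℕ} {a : (Fin n → ℝ) → (Fin n → ℝ)} {c p φ φd u : (Fin n → ℝ) → ℝ}
  {x : Fin n → ℝ}

/-- The flux `a c - ∇c` of a concentration `c`, whose divergence is the advection–diffusion
operator `L c`. The drift `a` stands for `Pe v`. -/
noncomputable def advDiffFlux (a : (Fin n → ℝ) → (Fin n → ℝ)) (c : (Fin n → ℝ) → ℝ)
    (x : Fin n → ℝ) : Fin n → ℝ :=
  fun i => a x i * c x - vgrad c x i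

/-- The formal adjoint `L† p = -a · ∇p - Δp` of the advection–diffusion operator with drift `a`. -/
noncomputable def adjointAdvDiff (a : (Fin n → ℝ) → (Fin n → ℝ)) (p : (Fin n → ℝ) → ℝ)
    (x : Fin n → ℝ) : ℝ :=
  -(a x ⬝ᵥ vgrad p x) - vdiv (vgrad p) x

/-- The flux `Pe v* u - β ∇u` of the modified equation, where `β = φ φ†` and
`Pe v* = a β + φ ∇φ† - φ† ∇φ`; the argument `φd` stands for `φ†`. -/
noncomputable def modifiedFlux (a : (Fin n → ℝ) → (Fin n → ℝ)) (φ φd u : (Fin n → ℝ) → ℝ)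
    (x : Fin n → ℝ) : Fin n → ℝ :=
  fun i => (a x i * (φ x * φd x) + φ x * vgrad φd x i - φd x * vgrad φ x i) * u x
    - (φ x * φd x) * vgrad u x i

lemma differentiableAt_advDiffFlux (ha : DifferentiableAt ℝ a x) (hc : ContDiffAt ℝ 2 c x) :
    DifferentiableAt ℝ (advDiffFlux a c) x :=
  differentiableAt_pi.2 fun i =>
    ((differentiableAt_pi.1 ha i).mul (hc.differentiableAt two_ne_zero)).sub
      (differentiableAt_pi.1 (differentiableAt_vgrad hc) i)

lemma dotProduct_advDiffFlux (b : Fin n → ℝ) :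
    b ⬝ᵥ advDiffFlux a c x = c x * (a x ⬝ᵥ b) - vgrad c x ⬝ᵥ b := by
  have hflux : advDiffFlux a c x = c x • a x - vgrad c x :=
    funext fun i => by simp [advDiffFlux, mul_comm]
  rw [hflux, dotProduct_sub, dotProduct_smul, smul_eq_mul, dotProduct_comm b, dotProduct_comm b]

theorem lagrange_identity_advDiff (ha : DifferentiableAt ℝ a x) (hp : ContDiffAt ℝ 2 p x)
    (hc : ContDiffAt ℝ 2 c x) :
    p x * vdiv (advDiffFlux a c) x - c x * adjointAdvDiff a p x
      = vdiv (fun y => p y • advDiffFlux a c y + c y • vgrad p y) x := by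
  have hp' : DifferentiableAt ℝ p x := hp.differentiableAt two_ne_zero
  have hc' : DifferentiableAt ℝ c x := hc.differentiableAt two_ne_zero
  have hJ := differentiableAt_advDiffFlux ha hc
  have hgp := differentiableAt_vgrad hp
  rw [vdiv_add (hp'.fun_smul hJ) (hc'.fun_smul hgp), vdiv_smul hp' hJ, vdiv_smul hc' hgp,
    dotProduct_advDiffFlux, adjointAdvDiff]
  ring

lemma smul_advDiffFlux_add_smul_vgrad (hφ : DifferentiableAt ℝ φ x)
    (hu : DifferentiableAt ℝ u x) (r : ℝ) :
    φd x • advDiffFlux a (fun y => φ y * r * u y) x + (φ x * r * u x) • vgrad φd x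
      = r • modifiedFlux a φ φd u x := by
  have hgrad : vgrad (fun y => φ y * r * u y) x = r • (φ x • vgrad u x + u x • vgrad φ x) := by
    simp only [mul_comm (φ _) r, mul_assoc, vgrad_const_mul, vgrad_mul hφ hu]
  ext i
  simp only [advDiffFlux, modifiedFlux, hgrad, Pi.add_apply, Pi.smul_apply, smul_eq_mul]
  ring

theorem mul_vdiv_advDiffFlux (ha : DifferentiableAt ℝ a x) (hφ : ContDiffAt ℝ 2 φ x)
    (hφd : ContDiffAt ℝ 2 φd x) (hu : ContDiffAt ℝ 2 u x) (r : ℝ) :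
    φd x * vdiv (advDiffFlux a fun y => φ y * r * u y) x
      = r * vdiv (modifiedFlux a φ φd u) x + φ x * r * u x * adjointAdvDiff a φd x := by
  have hflux : (fun y => φd y • advDiffFlux a (fun z => φ z * r * u z) y
      + (φ y * r * u y) • vgrad φd y) =ᶠ[nhds x] fun y => r • modifiedFlux a φ φd u y := by
    filter_upwards [hφ.eventually (by simp), hu.eventually (by simp)] with y hφy huy
    exact smul_advDiffFlux_add_smul_vgrad (hφy.differentiableAt two_ne_zero)
      (huy.differentiableAt two_ne_zero) r
  rw [← sub_eq_iff_eq_add, lagrange_identity_advDiff ha hφd ((hφ.mul contDiffAt_const).mul hu),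
    vdiv_congr_of_eventuallyEq hflux, vdiv_const_smul]

lemma deriv_mul_exp_mul {f : ℝ → ℝ} {t : ℝ} (hf : DifferentiableAt ℝ f t) (k μ : ℝ) :
    deriv (fun s => k * Real.exp (-μ * s) * f s) t
      = k * Real.exp (-μ * t) * (deriv f t - μ * f t) := by
  have hexp : HasDerivAt (fun s => Real.exp (-μ * s)) (Real.exp (-μ * t) * -μ) t := by
    simpa using ((hasDerivAt_id t).const_mul (-μ)).exp
  rw [((hexp.const_mul k).fun_mul hf.hasDerivAt).deriv]
  ring

theorem mul_advDiff_eq_exp_mul_modified {μ t : ℝ} {w : (Fin n → ℝ) → ℝ → ℝ}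
    (ha : DifferentiableAt ℝ a x) (hφ : ContDiffAt ℝ 2 φ x) (hφd : ContDiffAt ℝ 2 φd x)
    (hadj : adjointAdvDiff a φd x = μ * φd x)
    (hw_space : ContDiffAt ℝ 2 (fun y => w y t) x) (hw_time : DifferentiableAt ℝ (w x) t) :
    φd x * (deriv (fun s => φ x * Real.exp (-μ * s) * w x s) t
        + vdiv (advDiffFlux a fun y => φ y * Real.exp (-μ * t) * w y t) x)
      = Real.exp (-μ * t) * (φ x * φd x * deriv (w x) t
        + vdiv (modifiedFlux a φ φd fun y => w y t) x) := by
  rw [mul_add, deriv_mul_exp_mul hw_time, mul_vdiv_advDiffFlux ha hφ hφd hw_space, hadj]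
  ring

theorem full_spectral_decomposition_general {U : Set (Fin n → ℝ)} {μ : ℝ}
    {w : (Fin n → ℝ) → ℝ → ℝ}
    (ha : ∀ x ∈ U, DifferentiableAt ℝ a x)
    (hφ : ∀ x ∈ U, ContDiffAt ℝ 2 φ x) (hφd : ∀ x ∈ U, ContDiffAt ℝ 2 φd x)
    (hφd_ne : ∀ x ∈ U, φd x ≠ 0)
    (hadj : ∀ x ∈ U, adjointAdvDiff a φd x = μ * φd x)
    (hw_space : ∀ x ∈ U, ∀ t, ContDiffAt ℝ 2 (fun y => w y t) x)
    (hw_time : ∀ x ∈ U, Differentiable ℝ (w x)) :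
    (∀ x ∈ U, ∀ t : ℝ,
      φd x * (deriv (fun s => φ x * Real.exp (-μ * s) * w x s) t
          + vdiv (advDiffFlux a fun y => φ y * Real.exp (-μ * t) * w y t) x)
        = Real.exp (-μ * t) * (φ x * φd x * deriv (w x) t
          + vdiv (modifiedFlux a φ φd fun y => w y t) x))
    ∧
    ((∀ x ∈ U, ∀ t : ℝ,
        deriv (fun s => φ x * Real.exp (-μ * s) * w x s) t
          + vdiv (advDiffFlux a fun y => φ y * Real.exp (-μ * t) * w y t) x = 0)
      ↔
      (∀ x ∈ U, ∀ t : ℝ,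
        φ x * φd x * deriv (w x) t + vdiv (modifiedFlux a φ φd fun y => w y t) x = 0)) := by
  have identity := fun x hx t => mul_advDiff_eq_exp_mul_modified (ha x hx) (hφ x hx) (hφd x hx)
    (hadj x hx) (hw_space x hx t) (hw_time x hx t)
  refine ⟨identity, forall₃_congr fun x hx t => ?_⟩
  rw [← mul_eq_zero_iff_left (hφd_ne x hx), identity x hx t,
    mul_eq_zero_iff_left (Real.exp_ne_zero _)]

end AdvectionDiffusion

/-- The full spectral decomposition `c = φ e^{−μt} w` of Section 3.1:
`φ† [∂ₜc + div(Pe v c − ∇c)] = e^{−μt} [β ∂ₜw + div(Pe v* w − β∇w)]`,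
with `β = φφ†` and `Pe v* = Pe v φφ† + φ∇φ† − φ†∇φ`; in particular `c` solves the
advection–diffusion equation on `U × ℝ` iff `w` solves the modified equation. -/
theorem full_spectral_decomposition {n : ℕ}
    (U : Set (Fin n → ℝ)) (hU : IsOpen U)
    (v : (Fin n → ℝ) → (Fin n → ℝ)) (hv : ContDiff ℝ 1 v)
    (Pe μ : ℝ) (φ φd : (Fin n → ℝ) → ℝ)
    (hφ : ContDiff ℝ 2 φ) (hφd : ContDiff ℝ 2 φd)
    (hφdpos : ∀ x ∈ U, 0 < φd x)
    (hadj : ∀ x ∈ U,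
      -Pe * (∑ i, v x i * vgrad φd x i) - vdiv (vgrad φd) x = μ * φd x)
    (w : (Fin n → ℝ) → ℝ → ℝ)
    (hw_space : ∀ t, ContDiff ℝ 2 (fun x => w x t))
    (hw_time : ∀ x, ContDiff ℝ 1 (fun t => w x t)) :
    (∀ x ∈ U, ∀ t : ℝ,
      φd x *
        (deriv (fun s => φ x * Real.exp (-μ * s) * w x s) t
          + vdiv (fun y i =>
              Pe * v y i * (φ y * Real.exp (-μ * t) * w y t)
                - vgrad (fun z => φ z * Real.exp (-μ * t) * w z t) y i) x)
      = Real.exp (-μ * t) *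
          (φ x * φd x * deriv (fun s => w x s) t
            + vdiv (fun y i =>
                (Pe * v y i * (φ y * φd y) + φ y * vgrad φd y i - φd y * vgrad φ y i)
                    * w y t
                  - (φ y * φd y) * vgrad (fun z => w z t) y i) x))
    ∧
    ((∀ x ∈ U, ∀ t : ℝ,
        deriv (fun s => φ x * Real.exp (-μ * s) * w x s) t
          + vdiv (fun y i =>
              Pe * v y i * (φ y * Real.exp (-μ * t) * w y t)
                - vgrad (fun z => φ z * Real.exp (-μ * t) * w z t) y i) x = 0)
      ↔
      (∀ x ∈ U, ∀ t : ℝ,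
        φ x * φd x * deriv (fun s => w x s) t
          + vdiv (fun y i =>
              (Pe * v y i * (φ y * φd y) + φ y * vgrad φd y i - φd y * vgrad φ y i)
                  * w y t
                - (φ y * φd y) * vgrad (fun z => w z t) y i) x = 0)) := by
  have hadj' : ∀ x ∈ U, adjointAdvDiff (fun y i => Pe * v y i) φd x = μ * φd x := fun x hx => by
    simpa [adjointAdvDiff, dotProduct, Finset.mul_sum, mul_assoc] using hadj x hx
  exact full_spectral_decomposition_general
    (fun x _ => (hv.differentiable one_ne_zero x).const_smul Pe)
    (fun _ _ => hφ.contDiffAt) (fun _ _ => hφd.contDiffAt) (fun x hx => (hφdpos x hx).ne') hadj'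
    (fun _ _ t => (hw_space t).contDiffAt) fun x _ => (hw_time x).differentiable one_ne_zero
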